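/- Opposition of interests: fix a complete preference profile and two stable matchings μ₁ and μ₂. Then every man weakly prefers μ₁ to μ₂ (for all m, μ₁(m) = μ₂(m) or μ₁(m) ≻ₘ μ₂(m)) if and only if every woman weakly prefers μ₂ to μ₁ (for all w, μ₂⁻¹(w) = μ₁⁻¹(w) or μ₂⁻¹(w) ≻_w μ₁⁻¹(w)). -/

import Mathlib

/-- The matching `μ` is stable for the preference profile `(prefM, prefW)`. -/
def MatchStable {N : ℕ} (prefM prefW : Fin N → Fin N → Fin N → Prop)
    (μ : Fin N ≃ Fin N) : Prop :=
  ¬ ∃ m w, prefM m w (μ m) ∧ prefW w m (μ.symm w)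

section Stability

variable {M W : Type*} {prefM : M → W → W → Prop} {prefW : W → M → M → Prop} {μ μ₁ μ₂ : M ≃ W}

/-- Stability of a perfect matching between arbitrary types of men and women: no pair blocks it.
On `Fin N` it unfolds to `MatchStable`; men and women are separate types so that their roles can
be exchanged. `prefM m w w'` means that `m` strictly prefers `w` to `w'`. -/
def IsStableMatching (prefM : M → W → W → Prop) (prefW : W → M → M → Prop) (μ : M ≃ W) : Prop :=
  ¬ ∃ m w, prefM m w (μ m) ∧ prefW w m (μ.symm w)

namespace IsStableMatching

theorem symm (h : IsStableMatching prefM prefW μ) : IsStableMatching prefW prefM μ.symm :=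
  fun ⟨w, m, hw, hm⟩ ↦ h ⟨m, w, hm, hw⟩

theorem woman_weakly_prefers_partner (h : IsStableMatching prefM prefW μ) {m : M} {w : W}
    [Std.Trichotomous (prefW w)] (hm : w = μ m ∨ prefM m w (μ m)) :
    μ.symm w = m ∨ prefW w (μ.symm w) m := by
  rcases hm with rfl | hm
  · exact .inl (μ.symm_apply_apply m)
  · have not_blocking : ¬ prefW w m (μ.symm w) := fun hw ↦ h ⟨m, w, hm, hw⟩
    exact (Std.Trichotomous.rel_or_eq_or_rel_swap.resolve_left not_blocking).imp_left Eq.symm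

theorem women_weakly_prefer_of_men [∀ w, Std.Trichotomous (prefW w)]
    (h₂ : IsStableMatching prefM prefW μ₂)
    (hmen : ∀ m, μ₁ m = μ₂ m ∨ prefM m (μ₁ m) (μ₂ m)) (w : W) :
    μ₂.symm w = μ₁.symm w ∨ prefW w (μ₂.symm w) (μ₁.symm w) :=
  h₂.woman_weakly_prefers_partner <| by
    simpa only [Equiv.apply_symm_apply] using hmen (μ₁.symm w)

end IsStableMatching

theorem men_weakly_prefer_iff_women_weakly_prefer_general
    [∀ m, Std.Trichotomous (prefM m)] [∀ w, Std.Trichotomous (prefW w)]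
    (h₁ : IsStableMatching prefM prefW μ₁) (h₂ : IsStableMatching prefM prefW μ₂) :
    (∀ m, μ₁ m = μ₂ m ∨ prefM m (μ₁ m) (μ₂ m)) ↔
      (∀ w, μ₂.symm w = μ₁.symm w ∨ prefW w (μ₂.symm w) (μ₁.symm w)) :=
  ⟨h₂.women_weakly_prefer_of_men, h₁.symm.women_weakly_prefer_of_men⟩

end Stability

/-- Opposition of interests: for two stable matchings `μ₁` and `μ₂`, every man weakly
prefers `μ₁` to `μ₂` if and only if every woman weakly prefers `μ₂` to `μ₁`. -/
theorem men_weakly_prefer_iff_women_weakly_prefer (N : ℕ) (hN : 1 ≤ N)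
    (prefM prefW : Fin N → Fin N → Fin N → Prop)
    (hM : ∀ m, IsStrictTotalOrder (Fin N) (prefM m))
    (hW : ∀ w, IsStrictTotalOrder (Fin N) (prefW w))
    (μ₁ μ₂ : Fin N ≃ Fin N)
    (h₁ : MatchStable prefM prefW μ₁) (h₂ : MatchStable prefM prefW μ₂) :
    (∀ m, μ₁ m = μ₂ m ∨ prefM m (μ₁ m) (μ₂ m)) ↔
      (∀ w, μ₂.symm w = μ₁.symm w ∨ prefW w (μ₂.symm w) (μ₁.symm w)) :=
  men_weakly_prefer_iff_women_weakly_prefer_general h₁ h₂
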